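/- arXiv:1903.03880 — 2 statements merged into one kernel-verified Lean document; each statement's English description precedes it below -/
import Mathlib

section
/- Let n and m be finite types and let Φ : Matrix n n ℂ →ₗ[ℂ] Matrix n n ℂ be trace-preserving and completely positive. Then for every Hermitian Δ ∈ Matrix (m × n) (m × n) ℂ, one has ‖(id_m ⊗ Φ)(Δ)‖₁ ≤ ‖Δ‖₁, i.e., the trace norm of Hermitian matrices is contractive under id ⊗ Φ. -/
open Matrix
open scoped ComplexOrder

/-- The positive semidefinite square root of a positive semidefinite matrix
(the definition that Mathlib had under this name). -/
noncomputable def Matrix.PosSemidef.sqrt {n 𝕜 : Type*} [Fintype n] [RCLike 𝕜] [DecidableEq n]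
    {A : Matrix n n 𝕜} (hA : A.PosSemidef) : Matrix n n 𝕜 :=
  hA.1.eigenvectorUnitary.1 * diagonal ((↑) ∘ Real.sqrt ∘ hA.1.eigenvalues) *
    (star hA.1.eigenvectorUnitary : Matrix n n 𝕜)

/-- The trace norm of a matrix: the trace of the positive semidefinite square root of `AᴴA`. -/
noncomputable def traceNorm {n : Type*} [Fintype n] [DecidableEq n] (A : Matrix n n ℂ) : ℝ :=
  ((Matrix.posSemidef_conjTranspose_mul_self A).sqrt.trace).re

/-- The blockwise application `id_m ⊗ Φ` of a linear map `Φ` on `Matrix n n ℂ`: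
`((id_m ⊗ Φ)(Δ))((i,k),(j,l)) = (Φ(Δ_{i,j}))(k,l)` where `Δ_{i,j}(k,l) = Δ((i,k),(j,l))`
is the `(i,j)` block of `Δ`. -/
def idTensor (m : Type*) [Fintype m] {n : Type*} [Fintype n]
    (Φ : Matrix n n ℂ →ₗ[ℂ] Matrix n n ℂ) :
    Matrix (m × n) (m × n) ℂ →ₗ[ℂ] Matrix (m × n) (m × n) ℂ where
  toFun Δ := Matrix.of fun p q =>
    (Φ (Matrix.of fun k l => Δ (p.1, k) (q.1, l))) p.2 q.2
  map_add' Δ Δ' := by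
    have h : ∀ i j : m, (Matrix.of fun k l => (Δ + Δ') (i, k) (j, l))
        = (Matrix.of fun k l => Δ (i, k) (j, l))
          + (Matrix.of fun k l => Δ' (i, k) (j, l)) := by
      intro i j; ext k l; simp [Matrix.add_apply]
    ext ⟨i, k⟩ ⟨j, l⟩
    simp only [Matrix.of_apply, Matrix.add_apply]
    rw [← Matrix.add_apply, ← map_add, ← h]
    rfl
  map_smul' c Δ := by
    have h : ∀ i j : m, (Matrix.of fun k l => (c • Δ) (i, k) (j, l))
        = c • (Matrix.of fun k l => Δ (i, k) (j, l)) := by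
      intro i j; ext k l; simp [Matrix.smul_apply]
    ext ⟨i, k⟩ ⟨j, l⟩
    simp only [Matrix.of_apply, Matrix.smul_apply, RingHom.id_apply]
    rw [← Matrix.smul_apply, ← LinearMap.map_smul, ← h]
    rfl

/-- Complete positivity: `id_m ⊗ Φ` maps positive semidefinite matrices to positive
semidefinite matrices for every finite type `m`. -/
def IsCompletelyPositive {n : Type*} [Fintype n]
    (Φ : Matrix n n ℂ →ₗ[ℂ] Matrix n n ℂ) : Prop :=
  ∀ (m : Type) (_ : Fintype m) (Δ : Matrix (m × n) (m × n) ℂ),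
    Δ.PosSemidef → (idTensor m Φ Δ).PosSemidef

/-- Trace preservation. -/
def IsTracePreserving {n : Type*} [Fintype n]
    (Φ : Matrix n n ℂ →ₗ[ℂ] Matrix n n ℂ) : Prop :=
  ∀ X : Matrix n n ℂ, (Φ X).trace = X.trace

/-! For a positive map `Ψ` and a Hermitian `A`, applying `Ψ` to `-|A| ≤ A ≤ |A|` gives
`-Ψ|A| ≤ Ψ A ≤ Ψ|A|`. Evaluating this on a unit eigenvector of `Ψ A` bounds the absolute value of
the eigenvalue by the quadratic form of `Ψ|A|`; summing over an orthonormal eigenbasis,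
`‖Ψ A‖₁ ≤ tr Ψ|A|`, which is at most `tr |A| = ‖A‖₁` when `Ψ` does not increase the trace.
The map `id ⊗ Φ` is positive because `Φ` is completely positive, and it inherits trace preservation
from the diagonal blocks. -/

open scoped MatrixOrder

section FunctionalCalculus

variable {R : Type*} [NonUnitalRing R] [StarRing R] [TopologicalSpace R] [Module ℝ R]
  [SMulCommClass ℝ R R] [IsScalarTower ℝ R R]
  [NonUnitalContinuousFunctionalCalculus ℝ R IsSelfAdjoint] [PartialOrder R] [StarOrderedRing R]
  [NonnegSpectrumClass ℝ R] [IsTopologicalRing R] [T2Space R] {a : R}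

theorem le_cfcAbs (ha : IsSelfAdjoint a) : a ≤ CFC.abs a := by
  rw [← sub_nonneg, CFC.abs_sub_self a ha]
  exact nsmul_nonneg (CFC.negPart_nonneg a) 2

theorem neg_cfcAbs_le (ha : IsSelfAdjoint a) : -CFC.abs a ≤ a := by
  simpa only [CFC.abs_neg] using neg_le.mp (le_cfcAbs ha.neg)

end FunctionalCalculus

section RCLike

variable {n 𝕜 : Type*} [RCLike 𝕜] {A P : Matrix n n 𝕜}

theorem isHermitian_of_neg_le_of_le (hneg : -P ≤ A) (hle : A ≤ P) : A.IsHermitian := by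
  have hadd : (A - -P).IsHermitian := (le_iff.mp hneg).isHermitian
  have hA : A = (2⁻¹ : ℝ) • ((A - -P) - (P - A)) := by module
  rw [hA]
  exact (hadd.sub (le_iff.mp hle).isHermitian).smul (.all _)

variable [Fintype n]

theorem abs_re_dotProduct_mulVec_le (hneg : -P ≤ A) (hle : A ≤ P) (x : n → 𝕜) :
    |RCLike.re (star x ⬝ᵥ A *ᵥ x)| ≤ RCLike.re (star x ⬝ᵥ P *ᵥ x) := by
  have hsub := (le_iff.mp hle).re_dotProduct_nonneg x
  have hadd := (le_iff.mp hneg).re_dotProduct_nonneg x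
  simp only [sub_neg_eq_add, sub_mulVec, add_mulVec, dotProduct_sub, dotProduct_add, map_sub,
    map_add] at hsub hadd
  exact abs_le.mpr ⟨by linarith, by linarith⟩

theorem trace_eq_sum_dotProduct_mulVec {ι : Type*} [Fintype ι] (A : Matrix n n 𝕜)
    (b : OrthonormalBasis ι 𝕜 (EuclideanSpace 𝕜 n)) :
    A.trace = ∑ i, star ⇑(b i) ⬝ᵥ A *ᵥ ⇑(b i) := by
  classical
  rw [← trace_toLin_eq A (EuclideanSpace.basisFun n 𝕜).toBasis,
    ← toEuclideanLin_eq_toLin_orthonormal, LinearMap.trace_eq_sum_inner _ b]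
  simp only [EuclideanSpace.inner_eq_star_dotProduct, ofLp_toLpLin, toLin'_apply, dotProduct_comm]

variable [DecidableEq n]

theorem posSemidefSqrt_eq_cfcSqrt (hA : A.PosSemidef) : hA.sqrt = CFC.sqrt A := by
  rw [CFC.sqrt_eq_real_sqrt A hA.nonneg, cfcₙ_eq_cfc, hA.1.cfc_eq]
  rfl

theorem trace_cfc_eq_sum_eigenvalues (hA : A.IsHermitian) (f : ℝ → ℝ) :
    (cfc f A).trace = ∑ i, (f (hA.eigenvalues i) : 𝕜) := by
  rw [hA.cfc_eq, IsHermitian.cfc, Unitary.conjStarAlgAut_apply, trace_mul_comm, ← mul_assoc,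
    Unitary.coe_star_mul_self, one_mul, trace_diagonal]
  rfl

theorem re_trace_cfcAbs_eq_sum_abs_eigenvalues (hA : A.IsHermitian) :
    RCLike.re (CFC.abs A).trace = ∑ i, |hA.eigenvalues i| := by
  rw [CFC.abs_eq_cfc_norm A hA, trace_cfc_eq_sum_eigenvalues hA, ← RCLike.ofReal_sum,
    RCLike.ofReal_re]
  simp only [Real.norm_eq_abs]

theorem re_trace_cfcAbs_le_of_neg_le_of_le (hneg : -P ≤ A) (hle : A ≤ P) :
    RCLike.re (CFC.abs A).trace ≤ RCLike.re P.trace := by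
  have hA := isHermitian_of_neg_le_of_le hneg hle
  rw [re_trace_cfcAbs_eq_sum_abs_eigenvalues hA,
    trace_eq_sum_dotProduct_mulVec P hA.eigenvectorBasis, map_sum]
  gcongr with i
  rw [hA.eigenvalues_eq i]
  exact abs_re_dotProduct_mulVec_le hneg hle _

end RCLike

theorem traceNorm_eq_re_trace_cfcAbs {n : Type*} [Fintype n] [DecidableEq n] (A : Matrix n n ℂ) :
    traceNorm A = (CFC.abs A).trace.re := by
  rw [traceNorm, posSemidefSqrt_eq_cfcSqrt]
  rfl

theorem traceNorm_idTensor_le_general {n p : Type*} [Fintype n] [DecidableEq n]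
    [Fintype p] [DecidableEq p] (Ψ : Matrix n n ℂ →ₚ[ℂ] Matrix p p ℂ)
    (hΨ : ∀ P, 0 ≤ P → (Ψ P).trace ≤ P.trace) {A : Matrix n n ℂ} (hA : A.IsHermitian) :
    traceNorm (Ψ A) ≤ traceNorm A := by
  have hneg : -Ψ (CFC.abs A) ≤ Ψ A := by
    simpa only [map_neg] using OrderHomClass.mono Ψ (neg_cfcAbs_le hA)
  have hle : Ψ A ≤ Ψ (CFC.abs A) := OrderHomClass.mono Ψ (le_cfcAbs hA)
  calc traceNorm (Ψ A) = (CFC.abs (Ψ A)).trace.re := traceNorm_eq_re_trace_cfcAbs _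
    _ ≤ (Ψ (CFC.abs A)).trace.re := re_trace_cfcAbs_le_of_neg_le_of_le hneg hle
    _ ≤ (CFC.abs A).trace.re := (Complex.le_def.mp (hΨ _ (CFC.abs_nonneg A))).1
    _ = traceNorm A := (traceNorm_eq_re_trace_cfcAbs A).symm

section idTensor

variable {n m : Type*} [Fintype n] [Fintype m]

theorem idTensor_submatrix_map {l : Type*} [Fintype l] (Φ : Matrix n n ℂ →ₗ[ℂ] Matrix n n ℂ)
    (f : l → m) (Δ : Matrix (m × n) (m × n) ℂ) :
    idTensor l Φ (Δ.submatrix (Prod.map f id) (Prod.map f id)) =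
      (idTensor m Φ Δ).submatrix (Prod.map f id) (Prod.map f id) :=
  rfl

variable {Φ : Matrix n n ℂ →ₗ[ℂ] Matrix n n ℂ}

-- `IsCompletelyPositive` only quantifies over `m : Type`, hence the detour through `Fin (card m)`.
theorem IsCompletelyPositive.posSemidef_idTensor (hCP : IsCompletelyPositive Φ)
    {Δ : Matrix (m × n) (m × n) ℂ} (hΔ : Δ.PosSemidef) : (idTensor m Φ Δ).PosSemidef := by
  let e := Fintype.equivFin m
  have h := (hCP _ inferInstance _ (hΔ.submatrix (Prod.map e.symm id))).submatrix (Prod.map e id)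
  rw [idTensor_submatrix_map, submatrix_submatrix, Prod.map_comp_map] at h
  simpa using h

theorem IsTracePreserving.trace_idTensor (hTP : IsTracePreserving Φ)
    (Δ : Matrix (m × n) (m × n) ℂ) : (idTensor m Φ Δ).trace = Δ.trace := by
  simp only [trace, Fintype.sum_prod_type]
  exact Finset.sum_congr rfl fun i _ => hTP (Matrix.of fun k l => Δ (i, k) (i, l))

end idTensor

/-- The trace norm of Hermitian matrices is contractive under `id ⊗ Φ` for any completely
positive trace-preserving map `Φ`. -/
theorem traceNorm_idTensor_le {n m : Type*} [Fintype n] [DecidableEq n]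
    [Fintype m] [DecidableEq m]
    (Φ : Matrix n n ℂ →ₗ[ℂ] Matrix n n ℂ)
    (hTP : IsTracePreserving Φ) (hCP : IsCompletelyPositive Φ)
    (Δ : Matrix (m × n) (m × n) ℂ) (hΔ : Δ.IsHermitian) :
    traceNorm (idTensor m Φ Δ) ≤ traceNorm Δ := by
  let Ψ : Matrix (m × n) (m × n) ℂ →ₚ[ℂ] Matrix (m × n) (m × n) ℂ :=
    .mk₀ (idTensor m Φ) fun _ hP => (hCP.posSemidef_idTensor hP.posSemidef).nonneg
  exact traceNorm_idTensor_le_general Ψ (fun P _ => (hTP.trace_idTensor P).le) hΔ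
end

section
/- Let n, m be finite types and let Λ, Γ, Φ : Matrix n n ℂ →ₗ[ℂ] Matrix n n ℂ be linear maps with Λ = (1+s) • Γ - s • Φ for some real s ≥ 0, where Γ and Φ are completely positive and trace-preserving. Then for every finite index type J, every ensemble consisting of reals p_j ≥ 0 and density matrices σ_j ∈ Matrix (m × n) (m × n) ℂ (j ∈ J), and every POVM, i.e., family (M_j)_{j∈J} of positive semidefinite matrices in Matrix (m × n) (m × n) ℂ with Σ_j M_j = 1, the average state-discrimination success probability satisfies Σ_j p_j · Re Tr((id_m ⊗ Λ)(σ_j) · M_j) ≤ (1+s) · Σ_j p_j · Re Tr((id_m ⊗ Γ)(σ_j) · M_j). -/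
open Matrix
open scoped ComplexOrder

/-- A density matrix: positive semidefinite with unit trace. -/
def IsDensityMatrix {N : Type*} [Fintype N] (ρ : Matrix N N ℂ) : Prop :=
  ρ.PosSemidef ∧ ρ.trace = 1

/-!
If `c • Γ - Λ` is completely positive, then `id_m ⊗ (c • Γ - Λ)` sends every state to a positive
semidefinite matrix, whose trace pairing with a POVM element is nonnegative. So each outcome
contributes at most `c` times as much under `Λ` as under `Γ`. In the decomposition defining the
robustness, `c = 1 + s` and `c • Γ - Λ = s • Φ`.
-/

open scoped MatrixOrder in
theorem trace_mul_nonneg_of_posSemidef {N 𝕜 : Type*} [Fintype N] [RCLike 𝕜]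
    {A B : Matrix N N 𝕜} (hA : A.PosSemidef) (hB : B.PosSemidef) : 0 ≤ (A * B).trace := by
  classical
  obtain ⟨C, rfl⟩ := CStarAlgebra.nonneg_iff_eq_star_mul_self.mp hB.nonneg
  calc
    0 ≤ (C * A * Cᴴ).trace := (hA.mul_mul_conjTranspose_same C).trace_nonneg
    _ = (A * (star C * C)).trace := by
      rw [Matrix.mul_assoc, trace_mul_comm, Matrix.mul_assoc, star_eq_conjTranspose]

section IdTensor

variable {m n : Type*} [Fintype m] [Fintype n]

theorem idTensor_sub (Φ Ψ : Matrix n n ℂ →ₗ[ℂ] Matrix n n ℂ) :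
    idTensor m (Φ - Ψ) = idTensor m Φ - idTensor m Ψ :=
  rfl

theorem idTensor_smul (c : ℂ) (Φ : Matrix n n ℂ →ₗ[ℂ] Matrix n n ℂ) :
    idTensor m (c • Φ) = c • idTensor m Φ :=
  rfl

theorem idTensor_submatrix {m' : Type*} [Fintype m'] (Φ : Matrix n n ℂ →ₗ[ℂ] Matrix n n ℂ)
    (f : m' → m) (Δ : Matrix (m × n) (m × n) ℂ) :
    idTensor m' Φ (Δ.submatrix (Prod.map f id) (Prod.map f id)) =
      (idTensor m Φ Δ).submatrix (Prod.map f id) (Prod.map f id) :=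
  rfl

end IdTensor

namespace IsCompletelyPositive

variable {m n : Type*} [Fintype m] [Fintype n]

theorem smul {Φ : Matrix n n ℂ →ₗ[ℂ] Matrix n n ℂ} (hΦ : IsCompletelyPositive Φ)
    {c : ℂ} (hc : 0 ≤ c) : IsCompletelyPositive (c • Φ) := by
  intro k _ Δ hΔ
  rw [idTensor_smul]
  exact (hΦ k _ Δ hΔ).smul hc

theorem posSemidef_idTensor_s11 {Φ : Matrix n n ℂ →ₗ[ℂ] Matrix n n ℂ} (hΦ : IsCompletelyPositive Φ)
    {Δ : Matrix (m × n) (m × n) ℂ} (hΔ : Δ.PosSemidef) : (idTensor m Φ Δ).PosSemidef := by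
  -- `IsCompletelyPositive` only quantifies over ancillas in `Type`, so `m` is replaced by a `Fin`.
  let e := (Fintype.equivFin m).symm
  have hFin := hΦ (Fin (Fintype.card m)) inferInstance _ (hΔ.submatrix (Prod.map e id))
  rw [idTensor_submatrix] at hFin
  exact (posSemidef_submatrix_equiv (e.prodCongr (Equiv.refl n))).mp hFin

theorem re_trace_idTensor_mul_le {Λ Γ : Matrix n n ℂ →ₗ[ℂ] Matrix n n ℂ} {c : ℝ}
    (hgap : IsCompletelyPositive ((c : ℂ) • Γ - Λ)) {Δ E : Matrix (m × n) (m × n) ℂ}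
    (hΔ : Δ.PosSemidef) (hE : E.PosSemidef) :
    ((idTensor m Λ Δ * E).trace).re ≤ c * ((idTensor m Γ Δ * E).trace).re := by
  have hpair : 0 ≤ ((idTensor m ((c : ℂ) • Γ - Λ) Δ * E).trace).re :=
    (Complex.le_def.mp (trace_mul_nonneg_of_posSemidef (hgap.posSemidef_idTensor_s11 hΔ) hE)).1
  have hexpand : ((idTensor m ((c : ℂ) • Γ - Λ) Δ * E).trace).re =
      c * ((idTensor m Γ Δ * E).trace).re - ((idTensor m Λ Δ * E).trace).re := by
    rw [idTensor_sub, idTensor_smul, LinearMap.sub_apply, LinearMap.smul_apply, Matrix.sub_mul,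
      smul_mul, trace_sub, trace_smul, Complex.sub_re, smul_eq_mul, Complex.re_ofReal_mul]
  exact sub_nonneg.mp (hexpand ▸ hpair)

end IsCompletelyPositive

theorem state_discrimination_bound_general {n m : Type*} [Fintype n] [Fintype m]
    (Λ Γ : Matrix n n ℂ →ₗ[ℂ] Matrix n n ℂ) (c : ℝ)
    (hgap : IsCompletelyPositive ((c : ℂ) • Γ - Λ))
    (J : Type*) [Fintype J] (p : J → ℝ) (hp : ∀ j, 0 ≤ p j)
    (σ : J → Matrix (m × n) (m × n) ℂ) (hσ : ∀ j, (σ j).PosSemidef)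
    (M : J → Matrix (m × n) (m × n) ℂ) (hM : ∀ j, (M j).PosSemidef) :
    ∑ j, p j * ((idTensor m Λ (σ j) * M j).trace).re ≤
      c * ∑ j, p j * ((idTensor m Γ (σ j) * M j).trace).re := by
  calc
    ∑ j, p j * ((idTensor m Λ (σ j) * M j).trace).re
      ≤ ∑ j, p j * (c * ((idTensor m Γ (σ j) * M j).trace).re) :=
        Finset.sum_le_sum fun j _ =>
          mul_le_mul_of_nonneg_left (hgap.re_trace_idTensor_mul_le (hσ j) (hM j)) (hp j)
    _ = c * ∑ j, p j * ((idTensor m Γ (σ j) * M j).trace).re := by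
        simp only [Finset.mul_sum, mul_left_comm]

/-- Upper-bound half of the state-discrimination interpretation of the robustness of
non-Markovianity: for `Λ = (1+s)Γ - sΦ` with `Γ, Φ` completely positive trace-preserving,
the success probability of `Λ` in any state discrimination game is at most `(1+s)` times
that of the Markovian map `Γ`. -/
theorem state_discrimination_bound {n m : Type*} [Fintype n] [DecidableEq n] [Fintype m] [DecidableEq m]
    (Λ Γ Φ : Matrix n n ℂ →ₗ[ℂ] Matrix n n ℂ) (s : ℝ) (hs : 0 ≤ s)
    (hΓCP : IsCompletelyPositive Γ) (hΓTP : IsTracePreserving Γ)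
    (hΦCP : IsCompletelyPositive Φ) (hΦTP : IsTracePreserving Φ)
    (hdec : Λ = (((1 + s : ℝ) : ℂ)) • Γ - ((s : ℝ) : ℂ) • Φ)
    (J : Type*) [Fintype J] (p : J → ℝ) (hp : ∀ j, 0 ≤ p j)
    (σ : J → Matrix (m × n) (m × n) ℂ) (hσ : ∀ j, IsDensityMatrix (σ j))
    (M : J → Matrix (m × n) (m × n) ℂ) (hMpos : ∀ j, (M j).PosSemidef)
    (hMsum : ∑ j, M j = 1) :
    ∑ j, p j * ((idTensor m Λ (σ j) * M j).trace).re ≤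
      (1 + s) * ∑ j, p j * ((idTensor m Γ (σ j) * M j).trace).re := by
  have hgap : ((1 + s : ℝ) : ℂ) • Γ - Λ = (s : ℂ) • Φ := by rw [hdec, sub_sub_cancel]
  exact state_discrimination_bound_general Λ Γ (1 + s)
    (hgap ▸ hΦCP.smul (Complex.zero_le_real.mpr hs)) J p hp σ (fun j => (hσ j).1) M hMpos
end
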